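/- Every homogeneous polynomial P of degree p ≥ 0 in the two commuting variables z and z̄ with complex coefficients can be written in exactly one way as P = Σ_{j=0}^{⌊p/2⌋} h_j · (z² + z̄²)^j, where each h_j is a homogeneous polynomial of degree p − 2j satisfying (∂²/∂z² + ∂²/∂z̄²) h_j = 0. -/

import Mathlib

/-!
The commutator identity `tr (h Q) = (tr h) Q + 4 (d + 1) h`, for `h` homogeneous of degree `d`,
follows from Euler's identity. Iterating it (`tr_mul_Q_pow`), a harmonic `h` of degree `d` satisfies
`tr (h Q^(j+1)) = 4 (j + 1) (d + j + 1) h Q^j`. So `tr` sends a Fischer decomposition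
`∑ h_j Q^j` of degree `p` to one of degree `p - 2`, shifting the index by one and multiplying the
components by nonzero constants. Both halves of the theorem follow by induction on `⌊p/2⌋`:

* uniqueness (`fischer_unique`): applying `tr` to a vanishing sum kills all `h_j` with `j ≥ 1`, and
  then `h_0 = 0`;
* existence (`fischer_exists`): rescaling the components of `tr P` yields a sum
  `S = ∑_{j ≥ 1} h_j Q^j` with `tr S = tr P`, and `h_0 = P - S` is the missing harmonic component.
-/

open MvPolynomial

/-- The quadratic form `Q(z, z̄) = z² + z̄²`, where `X 0 = z` and `X 1 = z̄`. -/
noncomputable def Q : MvPolynomial (Fin 2) ℂ := X 0 ^ 2 + X 1 ^ 2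

/-- The operator `tr = ∂²/∂z² + ∂²/∂z̄²`. -/
noncomputable def tr (P : MvPolynomial (Fin 2) ℂ) : MvPolynomial (Fin 2) ℂ :=
  pderiv 0 (pderiv 0 P) + pderiv 1 (pderiv 1 P)

lemma tr_add (f g : MvPolynomial (Fin 2) ℂ) : tr (f + g) = tr f + tr g := by
  simp only [tr, map_add]; ring

lemma tr_sub (f g : MvPolynomial (Fin 2) ℂ) : tr (f - g) = tr f - tr g := by
  simp only [tr, map_sub]; ring

lemma tr_C_mul (c : ℂ) (f : MvPolynomial (Fin 2) ℂ) : tr (C c * f) = C c * tr f := by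
  simp only [tr, pderiv_C_mul]; ring

lemma tr_sum (s : Finset ℕ) (f : ℕ → MvPolynomial (Fin 2) ℂ) :
    tr (∑ j ∈ s, f j) = ∑ j ∈ s, tr (f j) := by
  simp only [tr, map_sum, Finset.sum_add_distrib]

lemma tr_isHomogeneous {p : ℕ} {P : MvPolynomial (Fin 2) ℂ} (hP : P.IsHomogeneous p) :
    (tr P).IsHomogeneous (p - 2) :=
  (hP.pderiv.pderiv).add (hP.pderiv.pderiv)

lemma Q_isHomogeneous : Q.IsHomogeneous 2 :=
  (isHomogeneous_X_pow 0 2).add (isHomogeneous_X_pow 1 2)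

lemma tr_eq_zero_of_lt_two {p : ℕ} (hp : p < 2) {P : MvPolynomial (Fin 2) ℂ}
    (hP : P.IsHomogeneous p) : tr P = 0 := by
  have key : ∀ i : Fin 2, pderiv i (pderiv i P) = 0 := by
    intro i
    have h : (pderiv i P).IsHomogeneous 0 := by
      have h := hP.pderiv (i := i)
      rwa [show p - 1 = 0 by omega] at h
    rw [← totalDegree_zero_iff_isHomogeneous, totalDegree_eq_zero_iff_eq_C] at h
    rw [h, pderiv_C]
  simp [tr, key]

lemma tr_mul_Q {d : ℕ} {h : MvPolynomial (Fin 2) ℂ} (hh : h.IsHomogeneous d) :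
    tr (h * Q) = tr h * Q + C (4 * ((d : ℂ) + 1)) * h := by
  have e := hh.sum_X_mul_pderiv
  simp only [Fin.sum_univ_two, nsmul_eq_mul] at e
  have h01 : pderiv (0 : Fin 2) (X 1 : MvPolynomial (Fin 2) ℂ) = 0 :=
    pderiv_X_of_ne (by decide)
  have h10 : pderiv (1 : Fin 2) (X 0 : MvPolynomial (Fin 2) ℂ) = 0 :=
    pderiv_X_of_ne (by decide)
  simp only [tr, Q, pderiv_mul, map_add, pow_two, pderiv_X_self, h01, h10, map_mul, map_natCast,
    map_one, map_ofNat, map_zero, pderiv_one]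
  linear_combination 4 * e

/-- For `tr h = 0`, multiplication by `Q` and `tr` act on the powers `h * Q ^ j` as the raising and
lowering operators of an `sl₂`-module with lowest-weight vector `h`. -/
lemma tr_mul_Q_pow {d : ℕ} {h : MvPolynomial (Fin 2) ℂ} (hh : h.IsHomogeneous d) (ht : tr h = 0)
    (j : ℕ) : tr (h * Q ^ (j + 1)) = C (4 * ((j : ℂ) + 1) * (d + j + 1)) * h * Q ^ j := by
  induction j with
  | zero => simp [tr_mul_Q hh, ht]
  | succ j ih =>
    have hj : (h * Q ^ (j + 1)).IsHomogeneous (d + 2 * (j + 1)) := hh.mul (Q_isHomogeneous.pow _)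
    rw [pow_succ Q (j + 1), ← mul_assoc, tr_mul_Q hj, ih]
    simp only [map_mul, map_add, map_natCast, map_one, map_ofNat, Nat.cast_add, Nat.cast_mul,
      Nat.cast_one, Nat.cast_ofNat]
    ring

lemma fischer_const_ne_zero (d j : ℕ) : (4 * ((j : ℂ) + 1) * (d + j + 1)) ≠ 0 := by
  have : (4 * (j + 1) * (d + j + 1) : ℕ) ≠ 0 := by positivity
  exact_mod_cast this

lemma fischer_unique (n : ℕ) : ∀ (p : ℕ) (h : ℕ → MvPolynomial (Fin 2) ℂ),
    (∀ j ≤ n, (h j).IsHomogeneous (p - 2 * j) ∧ tr (h j) = 0) →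
    ∑ j ∈ Finset.range (n + 1), h j * Q ^ j = 0 → ∀ j ≤ n, h j = 0 := by
  induction n with
  | zero =>
    intro p h _ hs j hj
    obtain rfl : j = 0 := by omega
    simpa using hs
  | succ n ih =>
    intro p h hh hs
    have hpos : ∀ j ≤ n, h (j + 1) = 0 := by
      intro j hj
      have hc := ih (p - 2)
        (fun j => C (4 * ((j : ℂ) + 1) * ((p - 2 * (j + 1) : ℕ) + j + 1)) * h (j + 1)) ?_ ?_ j hj
      · exact (mul_eq_zero.1 hc).resolve_left
          (fun h0 => fischer_const_ne_zero _ _ (C_eq_zero.1 h0))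
      · intro i hi
        obtain ⟨h1, h2⟩ := hh (i + 1) (by omega)
        refine ⟨?_, by rw [tr_C_mul, h2, mul_zero]⟩
        have := h1.C_mul (4 * ((i : ℂ) + 1) * ((p - 2 * (i + 1) : ℕ) + i + 1))
        rwa [show p - 2 * (i + 1) = p - 2 - 2 * i by omega] at this ⊢
      · have ht := congrArg tr hs
        rw [Finset.sum_range_succ', tr_add, tr_sum, pow_zero, mul_one, (hh 0 (by omega)).2,
          add_zero, show tr 0 = 0 by simp [tr]] at ht
        rw [← ht]
        refine Finset.sum_congr rfl fun i hi => ?_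
        obtain ⟨h1, h2⟩ := hh (i + 1) (by have := Finset.mem_range.1 hi; omega)
        rw [tr_mul_Q_pow h1 h2]
    have h0 : h 0 = 0 := by
      rw [Finset.sum_range_succ', Finset.sum_eq_zero, zero_add] at hs
      · simpa using hs
      · intro i hi
        rw [hpos i (by have := Finset.mem_range.1 hi; omega), zero_mul]
    intro j hj
    cases j with
    | zero => exact h0
    | succ j => exact hpos j (by omega)

/-- The two bounds on `p` say that `n = ⌊p/2⌋`. -/
lemma fischer_exists (n : ℕ) : ∀ (p : ℕ) (P : MvPolynomial (Fin 2) ℂ), 2 * n ≤ p → p < 2 * n + 2 →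
    P.IsHomogeneous p → ∃ h : ℕ → MvPolynomial (Fin 2) ℂ,
      (∀ j ≤ n, (h j).IsHomogeneous (p - 2 * j) ∧ tr (h j) = 0) ∧
      P = ∑ j ∈ Finset.range (n + 1), h j * Q ^ j := by
  induction n with
  | zero =>
    intro p P _ hp hP
    refine ⟨fun _ => P, ?_, by simp⟩
    intro j hj
    obtain rfl : j = 0 := by omega
    exact ⟨hP, tr_eq_zero_of_lt_two (by omega) hP⟩
  | succ n ih =>
    intro p P hp1 hp2 hP
    obtain ⟨g, hg, hgs⟩ := ih (p - 2) (tr P) (by omega) (by omega) (tr_isHomogeneous hP)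
    -- `k j` is the component of index `j + 1`: dividing by `c j` undoes the scaling by `tr`.
    let c : ℕ → ℂ := fun j => 4 * ((j : ℂ) + 1) * ((p - 2 * (j + 1) : ℕ) + j + 1)
    let k : ℕ → MvPolynomial (Fin 2) ℂ := fun j => C (c j)⁻¹ * g j
    have hk : ∀ j ≤ n, (k j).IsHomogeneous (p - 2 * (j + 1)) ∧ tr (k j) = 0 := by
      intro j hj
      obtain ⟨h1, h2⟩ := hg j hj
      refine ⟨?_, by simp only [k, tr_C_mul, h2, mul_zero]⟩
      rw [show p - 2 * (j + 1) = p - 2 - 2 * j by omega]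
      exact h1.C_mul _
    have htr : tr (∑ j ∈ Finset.range (n + 1), k j * Q ^ (j + 1)) = tr P := by
      rw [hgs, tr_sum]
      refine Finset.sum_congr rfl fun j hj => ?_
      obtain ⟨h1, h2⟩ := hk j (by have := Finset.mem_range.1 hj; omega)
      have hc : c j ≠ 0 := fischer_const_ne_zero _ _
      rw [tr_mul_Q_pow h1 h2]
      change C (c j) * (C (c j)⁻¹ * g j) * Q ^ j = _
      rw [← mul_assoc, ← C_mul, mul_inv_cancel₀ hc, C_1, one_mul]
    have hS : (∑ j ∈ Finset.range (n + 1), k j * Q ^ (j + 1)).IsHomogeneous p := by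
      refine IsHomogeneous.sum _ _ _ fun j hj => ?_
      have hj' := Finset.mem_range.1 hj
      have := (hk j (by omega)).1.mul (Q_isHomogeneous.pow (j + 1))
      rwa [show p - 2 * (j + 1) + 2 * (j + 1) = p by omega] at this
    refine ⟨fun j => Nat.casesOn j (P - ∑ j ∈ Finset.range (n + 1), k j * Q ^ (j + 1)) k, ?_, ?_⟩
    · intro j hj
      cases j with
      | zero => exact ⟨hP.sub hS, (tr_sub _ _).trans (by rw [htr, sub_self])⟩
      | succ j => exact hk j (by omega)
    · rw [Finset.sum_range_succ']
      simp

/-- Full (iterated) Fischer decomposition: every homogeneous polynomial `P` of degree `p ≥ 0`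
in `ℂ[z, z̄]` can be written in exactly one way as `P = Σ_{j=0}^{⌊p/2⌋} h_j · (z² + z̄²)^j`,
where each `h_j` is homogeneous of degree `p − 2j` and `tr h_j = 0`. -/
theorem iterated_fischer_decomposition (p : ℕ)
    (P : MvPolynomial (Fin 2) ℂ) (hP : P.IsHomogeneous p) :
    ∃! h : ℕ → MvPolynomial (Fin 2) ℂ,
      (∀ j ≤ p / 2, (h j).IsHomogeneous (p - 2 * j) ∧ tr (h j) = 0) ∧
      (∀ j, p / 2 < j → h j = 0) ∧
      P = ∑ j ∈ Finset.range (p / 2 + 1), h j * Q ^ j := by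
  obtain ⟨h, hh, hs⟩ := fischer_exists (p / 2) p P (by omega) (by omega) hP
  refine existsUnique_of_exists_of_unique
    ⟨fun j => if j ≤ p / 2 then h j else 0, ?_, ?_, ?_⟩ ?_
  · intro j hj
    simpa only [if_pos hj] using hh j hj
  · intro j hj
    exact if_neg (by omega)
  · refine hs.trans (Finset.sum_congr rfl fun j hj => ?_)
    simp only [if_pos (show j ≤ p / 2 by have := Finset.mem_range.1 hj; omega)]
  · rintro f g ⟨hf, hf0, hfs⟩ ⟨hg, hg0, hgs⟩
    funext j
    by_cases hj : j ≤ p / 2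
    · refine sub_eq_zero.1 (fischer_unique (p / 2) p (fun j => f j - g j) ?_ ?_ j hj)
      · intro i hi
        exact ⟨(hf i hi).1.sub (hg i hi).1, by rw [tr_sub, (hf i hi).2, (hg i hi).2, sub_zero]⟩
      · simp only [sub_mul, Finset.sum_sub_distrib]
        rw [← hfs, ← hgs, sub_self]
    · rw [hf0 j (by omega), hg0 j (by omega)]
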